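/- arXiv:1412.1033 — 2 statements merged into one kernel-verified Lean document; each statement's English description precedes it below -/
import Mathlib

section
/- The group homomorphism from the free group on three generators to the group of invertible 2×2 matrices over ℂ that sends the three generators to V₁, V₂, V₃ respectively is injective; that is, V₁, V₂, V₃ are free generators of the subgroup of SU(2) that they generate. -/
open Matrix

/-- The Pauli matrices `X, Y, Z`. -/
def Pauli : Fin 3 → Matrix (Fin 2) (Fin 2) ℂ :=
  ![!![0, 1; 1, 0], !![0, -Complex.I; Complex.I, 0], !![1, 0; 0, -1]]

/-- `V₁ = (I + 2iX)/√5`, `V₂ = (I + 2iY)/√5`, `V₃ = (I + 2iZ)/√5`. -/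
noncomputable def Vgen (i : Fin 3) : Matrix (Fin 2) (Fin 2) ℂ :=
  ((Real.sqrt 5 : ℝ) : ℂ)⁻¹ • (1 + (2 * Complex.I) • Pauli i)

/-- Left multiplication of an integral quaternion by `1 + t eᵢ`, where `eᵢ` is `i` times a
Pauli matrix. -/
def qact (i : Fin 3) (t : ℤ) (q : Fin 4 → ℤ) : Fin 4 → ℤ :=
  match i with
  | 0 => ![q 0 - t * q 1, q 1 + t * q 0, q 2 + t * q 3, q 3 - t * q 2]
  | 1 => ![q 0 - t * q 2, q 1 - t * q 3, q 2 + t * q 0, q 3 + t * q 1]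
  | 2 => ![q 0 - t * q 3, q 1 + t * q 2, q 2 - t * q 1, q 3 + t * q 0]

/-- The sign of a letter, times two. -/
def qsgn (b : Bool) : ℤ := if b then 2 else -2

/-- The integral quaternion attached to a word. -/
def qword : List (Fin 3 × Bool) → Fin 4 → ℤ
  | [] => ![1, 0, 0, 0]
  | l :: L => qact l.1 (qsgn l.2) (qword L)

/-- Divisibility by five of all coordinates. -/
def qzero (q : Fin 4 → ℤ) : Prop := 5 ∣ q 0 ∧ 5 ∣ q 1 ∧ 5 ∣ q 2 ∧ 5 ∣ q 3

/-- The matrix of an integral quaternion. -/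
noncomputable def qmat (q : Fin 4 → ℤ) : Matrix (Fin 2) (Fin 2) ℂ :=
  !![(q 0 : ℂ) + Complex.I * q 3, Complex.I * q 1 + q 2;
     Complex.I * q 1 - q 2, (q 0 : ℂ) - Complex.I * q 3]

lemma qmat_act (i : Fin 3) (t : ℤ) (q : Fin 4 → ℤ) :
    qmat (qact i t q) = (1 + ((t : ℂ) * Complex.I) • Pauli i) * qmat q := by
  have hI := Complex.I_mul_I
  fin_cases i <;> ext a b <;> fin_cases a <;> fin_cases b <;>
    simp [qmat, qact, Pauli, Matrix.mul_apply, Fin.sum_univ_two] <;> grind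

lemma qact_self (i : Fin 3) (b : Bool) (q : Fin 4 → ℤ) :
    qzero (qact i (-qsgn b) (qact i (qsgn b) q)) := by
  fin_cases i <;> cases b <;> simp [qzero, qact, qsgn] <;> omega

set_option maxHeartbeats 4000000 in
lemma qact_ne (i j : Fin 3) (b c : Bool) (h : i = j → b = c) (q : Fin 4 → ℤ)
    (h1 : qzero (qact j (-qsgn c) q)) (h2 : qzero (qact i (qsgn b) q)) : qzero q := by
  fin_cases i <;> fin_cases j <;> cases b <;> cases c <;>
    simp [qzero, qact, qsgn] at h h1 h2 ⊢ <;> omega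

lemma qword_ne : ∀ (L : List (Fin 3 × Bool)), FreeGroup.IsReduced L → ¬ qzero (qword L)
  | [], _ => by simp [qzero, qword]
  | [l], _ => by
      obtain ⟨i, b⟩ := l
      fin_cases i <;> cases b <;> simp [qzero, qword, qact, qsgn]
  | l :: m :: L, h => by
      intro hz
      rw [FreeGroup.isReduced_cons_cons] at h
      exact qword_ne (m :: L) h.2
        (qact_ne l.1 m.1 l.2 m.2 h.1 _ (qact_self _ _ _) hz)

lemma sqrt5_mul : ((Real.sqrt 5 : ℝ) : ℂ) * ((Real.sqrt 5 : ℝ) : ℂ) = 5 := by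
  rw [← Complex.ofReal_mul, Real.mul_self_sqrt (by norm_num)]; norm_num

lemma Vgen_inv (i : Fin 3) :
    (((Real.sqrt 5 : ℝ) : ℂ)⁻¹ • (1 + ((-2 : ℂ) * Complex.I) • Pauli i)) * Vgen i = 1 := by
  have hI := Complex.I_mul_I
  have h5 : ((Real.sqrt 5 : ℝ) : ℂ)⁻¹ * ((Real.sqrt 5 : ℝ) : ℂ)⁻¹ = 5⁻¹ := by
    rw [← mul_inv, sqrt5_mul]
  rw [Vgen, smul_mul_smul_comm, h5]
  fin_cases i <;> ext a b <;> fin_cases a <;> fin_cases b <;>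
    simp [Pauli, Matrix.mul_apply, Fin.sum_univ_two] <;> grind

lemma phi_word (φ : FreeGroup (Fin 3) →* GL (Fin 2) ℂ)
    (hφ : ∀ i : Fin 3, ((φ (FreeGroup.of i) : GL (Fin 2) ℂ) : Matrix (Fin 2) (Fin 2) ℂ) = Vgen i)
    (L : List (Fin 3 × Bool)) :
    qmat (qword L) = ((Real.sqrt 5 : ℝ) : ℂ) ^ L.length •
      ((φ (FreeGroup.mk L) : GL (Fin 2) ℂ) : Matrix (Fin 2) (Fin 2) ℂ) := by
  have h0 : ((Real.sqrt 5 : ℝ) : ℂ) ≠ 0 := fun h => by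
    have := sqrt5_mul; rw [h] at this; norm_num at this
  induction L with
  | nil =>
    rw [← FreeGroup.one_eq_mk, map_one]
    ext a b; fin_cases a <;> fin_cases b <;> simp [qmat, qword]
  | cons l L ih =>
    obtain ⟨i, b⟩ := l
    have hl : (1 + ((qsgn b : ℂ) * Complex.I) • Pauli i) = ((Real.sqrt 5 : ℝ) : ℂ) •
        ((φ (FreeGroup.mk [(i, b)]) : GL (Fin 2) ℂ) : Matrix (Fin 2) (Fin 2) ℂ) := by
      cases b with
      | true =>
        have := hφ i
        rw [FreeGroup.of] at this
        rw [this, Vgen, smul_smul, mul_inv_cancel₀ h0, one_smul]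
        simp [qsgn]
      | false =>
        have e : FreeGroup.mk [(i, false)] = (FreeGroup.of i)⁻¹ := by
          simp [FreeGroup.of, FreeGroup.inv_mk, FreeGroup.invRev]
        have hv := Vgen_inv i
        rw [← hφ i] at hv
        rw [e, map_inv, ← Units.eq_inv_of_mul_eq_one_right hv, smul_smul, mul_inv_cancel₀ h0,
          one_smul]
        simp [qsgn]
    have e : FreeGroup.mk ((i, b) :: L) = FreeGroup.mk [(i, b)] * FreeGroup.mk L := by
      rw [FreeGroup.mul_mk]; rfl
    rw [e, map_mul, Units.val_mul, qword, qmat_act, ih, hl, smul_mul_smul_comm,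
      List.length_cons, pow_succ']

/-- `V₁, V₂, V₃` freely generate the subgroup of `SU(2)` that they generate: the
homomorphism from the free group on three generators sending the generators to
`V₁, V₂, V₃` is injective. -/
theorem stmt6 (φ : FreeGroup (Fin 3) →* GL (Fin 2) ℂ)
    (hφ : ∀ i : Fin 3, ((φ (FreeGroup.of i) : GL (Fin 2) ℂ) : Matrix (Fin 2) (Fin 2) ℂ) = Vgen i) :
    Function.Injective φ := by
  rw [injective_iff_map_eq_one]
  intro w hw
  by_contra hne
  have hL : w.toWord ≠ [] := fun h => hne (FreeGroup.toWord_eq_nil_iff.mp h)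
  have key := phi_word φ hφ w.toWord
  have hq := qword_ne w.toWord FreeGroup.isReduced_toWord
  rw [FreeGroup.mk_toWord, hw] at key
  generalize qword w.toWord = q at key hq
  obtain ⟨n, hn⟩ : ∃ n, w.toWord.length = n + 1 :=
    Nat.exists_eq_succ_of_ne_zero (by simpa using hL)
  rw [hn] at key
  have k00 := congrFun (congrFun key 0) 0
  have k01 := congrFun (congrFun key 0) 1
  have k10 := congrFun (congrFun key 1) 0
  have k11 := congrFun (congrFun key 1) 1
  simp [qmat] at k00 k01 k10 k11
  have hI := Complex.I_ne_zero
  have a1 : (q 1 : ℂ) = 0 := by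
    have : Complex.I * (q 1 : ℂ) = 0 := by linear_combination (k01 + k10) / 2
    simpa using this
  have a2 : (q 2 : ℂ) = 0 := by linear_combination (k01 - k10) / 2
  have a3 : (q 3 : ℂ) = 0 := by
    have : Complex.I * (q 3 : ℂ) = 0 := by linear_combination (k00 - k11) / 2
    simpa using this
  have a0 : (q 0 : ℂ) = ((Real.sqrt 5 : ℝ) : ℂ) ^ (n + 1) := by
    linear_combination (k00 + k11) / 2
  have b0 : (q 0 : ℂ) * q 0 = 5 ^ (n + 1) := by
    rw [a0, ← mul_pow, sqrt5_mul]
  norm_cast at a1 a2 a3 b0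
  have d : (5 : ℤ) ∣ q 0 * q 0 := by
    rw [b0]; exact dvd_pow_self _ (by simp)
  have hp : Prime (5 : ℤ) := by norm_num
  have d0 : (5 : ℤ) ∣ q 0 := by rcases hp.dvd_or_dvd d with h | h <;> exact h
  exact hq ⟨d0, by simp [a1], by simp [a2], by simp [a3]⟩
end

section
/- Suppose A₁⋯A_t·B = A'₁⋯A'_{t'}·B', where A₁⋯A_t and A'₁⋯A'_{t'} are reduced products of matrices taken from {V₁, V₂, V₃, V₁⁻¹, V₂⁻¹, V₃⁻¹} and B, B' ∈ {I, −I, X, −X, Y, −Y, Z, −Z}. Then t = t', A_j = A'_j for all 1 ≤ j ≤ t, and B = B'. In other words, every element of the group generated by V₁, V₂, V₃, X, Y, Z has a unique normal form A₁⋯A_t·B. -/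
open Matrix

/-- The factor corresponding to the letter `(i, b)`: `Vᵢ` if `b = true`,
`Vᵢ⁻¹` if `b = false`. -/
noncomputable def VgenLetter (p : Fin 3 × Bool) : Matrix (Fin 2) (Fin 2) ℂ :=
  if p.2 then Vgen p.1 else (Vgen p.1)⁻¹

/-- The letters, scaled by `√5`, as matrices over the Gaussian integers. -/
def UG (p : Fin 3 × Bool) : Matrix (Fin 2) (Fin 2) GaussianInt :=
  if p.2 then
    (![!![1, ⟨0, 2⟩; ⟨0, 2⟩, 1], !![1, 2; -2, 1], !![⟨1, 2⟩, 0; 0, ⟨1, -2⟩]] : Fin 3 → _) p.1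
  else
    (![!![1, ⟨0, -2⟩; ⟨0, -2⟩, 1], !![1, -2; 2, 1], !![⟨1, -2⟩, 0; 0, ⟨1, 2⟩]] : Fin 3 → _) p.1

/-- Reduction of the Gaussian integers to `ZMod 5`, sending `i` to `2`. -/
def red5 : GaussianInt →+* ZMod 5 := Zsqrtd.lift ⟨2, by decide⟩

/-- Scaled letters modulo 5. -/
def U5 (p : Fin 3 × Bool) : Matrix (Fin 2) (Fin 2) (ZMod 5) := red5.mapMatrix (UG p)

lemma UG_conj (p : Fin 3 × Bool) : UG (p.1, !p.2) * UG p = (5 : GaussianInt) • 1 := by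
  obtain ⟨i, b⟩ := p
  fin_cases i <;> cases b <;> decide

lemma U5_conj (p : Fin 3 × Bool) : U5 (p.1, !p.2) * U5 p = 0 := by
  unfold U5
  rw [← map_mul, UG_conj]
  ext i j
  fin_cases i <;> fin_cases j <;> decide

lemma U5_ne (p : Fin 3 × Bool) : U5 p ≠ 0 := by
  revert p; decide

lemma U5_sandwich : ∀ p q : Fin 3 × Bool, q ≠ (p.1, !p.2) →
    ∃ c : ZMod 5, c * (U5 q * U5 p).trace = 1 ∧
      U5 q * U5 p * U5 q = (U5 q * U5 p).trace • U5 q := by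
  set_option maxRecDepth 100000 in decide

lemma prod5_ne : ∀ (w : List (Fin 3 × Bool)),
    w.IsChain (fun p q => q ≠ (p.1, !p.2)) → (w.map U5).prod ≠ 0
  | [], _ => by
    simp only [List.map_nil, List.prod_nil]
    decide
  | [p], _ => by simpa using U5_ne p
  | p :: q :: w, h => by
    rw [List.isChain_cons_cons] at h
    have ih := prod5_ne (q :: w) h.2
    intro h0
    apply ih
    obtain ⟨c, hc, hs⟩ := U5_sandwich p q h.1
    simp only [List.map_cons, List.prod_cons] at h0 ⊢
    have h1 : U5 q * U5 p * U5 q * (w.map U5).prod = 0 := by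
      rw [mul_assoc, mul_assoc, h0, mul_zero]
    rw [hs, smul_mul_assoc] at h1
    rw [← one_smul (ZMod 5) (U5 q * (w.map U5).prod), ← hc, mul_smul, h1, smul_zero]

lemma map_prodG (w : List (Fin 3 × Bool)) :
    red5.mapMatrix (w.map UG).prod = (w.map U5).prod := by
  rw [map_list_prod, List.map_map]; rfl

lemma sqrt5_sq : ((Real.sqrt 5 : ℝ) : ℂ) ^ 2 = 5 := by
  rw [← Complex.ofReal_pow, Real.sq_sqrt (by norm_num)]; norm_num

lemma sqrt5_ne : ((Real.sqrt 5 : ℝ) : ℂ) ≠ 0 := by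
  intro h
  have := sqrt5_sq
  rw [h] at this
  norm_num at this

lemma Vgen_eq (i : Fin 3) : Vgen i =
    ((Real.sqrt 5 : ℝ) : ℂ)⁻¹ • GaussianInt.toComplex.mapMatrix (UG (i, true)) := by
  unfold Vgen
  congr 1
  ext a b
  fin_cases i <;> fin_cases a <;> fin_cases b <;>
    simp [Pauli, UG, GaussianInt.toComplex_def, mul_assoc]

lemma letter_eq (p : Fin 3 × Bool) : VgenLetter p =
    ((Real.sqrt 5 : ℝ) : ℂ)⁻¹ • GaussianInt.toComplex.mapMatrix (UG p) := by
  obtain ⟨i, b⟩ := p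
  cases b
  · simp only [VgenLetter, Bool.false_eq_true, if_false]
    apply Matrix.inv_eq_left_inv
    rw [Vgen_eq, smul_mul_smul_comm, ← map_mul]
    have h := UG_conj (i, true)
    simp only [Bool.not_true] at h
    rw [h, ← mul_inv, ← sq, sqrt5_sq]
    have h5 : GaussianInt.toComplex 5 = 5 := map_ofNat _ 5
    ext a b
    fin_cases a <;> fin_cases b <;> simp [h5]
  · simp [VgenLetter, Vgen_eq]

lemma prod_eq (w : List (Fin 3 × Bool)) : (w.map VgenLetter).prod =
    (((Real.sqrt 5 : ℝ) : ℂ)⁻¹ ^ w.length) •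
      GaussianInt.toComplex.mapMatrix (w.map UG).prod := by
  induction w with
  | nil => simp
  | cons p w ih =>
    simp only [List.map_cons, List.prod_cons, ih, letter_eq, smul_mul_smul_comm, ← map_mul,
      List.length_cons, pow_succ']

lemma pauli_lift (B : Matrix (Fin 2) (Fin 2) ℂ)
    (hB : B ∈ ({1, -1, Pauli 0, -Pauli 0, Pauli 1, -Pauli 1, Pauli 2, -Pauli 2} :
      Set (Matrix (Fin 2) (Fin 2) ℂ))) :
    ∃ G : Matrix (Fin 2) (Fin 2) GaussianInt,
      G * G = 1 ∧ B = GaussianInt.toComplex.mapMatrix G := by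
  have key : ∀ i, ∃ G : Matrix (Fin 2) (Fin 2) GaussianInt,
      G * G = 1 ∧ Pauli i = GaussianInt.toComplex.mapMatrix G := by
    intro i
    refine ⟨(![!![0, 1; 1, 0], !![0, ⟨0, -1⟩; ⟨0, 1⟩, 0], !![1, 0; 0, -1]] : Fin 3 → _) i,
      ?_, ?_⟩
    · fin_cases i <;> decide
    · ext a b
      fin_cases i <;> fin_cases a <;> fin_cases b <;>
        simp [Pauli, GaussianInt.toComplex_def]
  have neg : ∀ C : Matrix (Fin 2) (Fin 2) ℂ, (∃ G : Matrix (Fin 2) (Fin 2) GaussianInt,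
      G * G = 1 ∧ C = GaussianInt.toComplex.mapMatrix G) →
      ∃ G : Matrix (Fin 2) (Fin 2) GaussianInt,
      G * G = 1 ∧ -C = GaussianInt.toComplex.mapMatrix G := by
    rintro C ⟨G, h1, h2⟩
    exact ⟨-G, by rw [neg_mul_neg, h1], by rw [map_neg, h2]⟩
  have one : ∃ G : Matrix (Fin 2) (Fin 2) GaussianInt,
      G * G = 1 ∧ (1 : Matrix (Fin 2) (Fin 2) ℂ) = GaussianInt.toComplex.mapMatrix G :=
    ⟨1, by simp, by rw [map_one]⟩
  simp only [Set.mem_insert_iff, Set.mem_singleton_iff] at hB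
  rcases hB with rfl | rfl | rfl | rfl | rfl | rfl | rfl | rfl
  · exact one
  · exact neg _ one
  · exact key 0
  · exact neg _ (key 0)
  · exact key 1
  · exact neg _ (key 1)
  · exact key 2
  · exact neg _ (key 2)

lemma red_zero (a b : GaussianInt) (k : ℕ)
    (h : GaussianInt.toComplex a = ((Real.sqrt 5 : ℝ) : ℂ) ^ (k + 1) * GaussianInt.toComplex b) :
    red5 a = 0 := by
  have h1 : a ^ 2 = 5 ^ (k + 1) * b ^ 2 := by
    apply GaussianInt.toComplex_injective
    rw [map_pow, h, map_mul, map_pow, map_pow, mul_pow, ← pow_mul, mul_comm (k + 1), pow_mul,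
      sqrt5_sq, show GaussianInt.toComplex 5 = 5 from map_ofNat _ 5]
  have h2 := congrArg red5 h1
  have h5 : red5 5 = 0 := by decide
  rw [map_pow, map_mul, map_pow, h5, zero_pow (by omega), zero_mul] at h2
  have : Fact (Nat.Prime 5) := ⟨by norm_num⟩
  exact pow_eq_zero_iff (by norm_num) |>.1 h2

lemma not_lt_len (w w' : List (Fin 3 × Bool))
    (hred : w.IsChain (fun p q => q ≠ (p.1, !p.2)))
    (G G' : Matrix (Fin 2) (Fin 2) GaussianInt) (hG : G * G = 1)
    (heq : (w.map VgenLetter).prod * GaussianInt.toComplex.mapMatrix G =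
      (w'.map VgenLetter).prod * GaussianInt.toComplex.mapMatrix G') :
    ¬ w'.length < w.length := by
  intro hlt
  obtain ⟨k, hk⟩ := Nat.exists_eq_add_of_lt hlt
  rw [prod_eq, prod_eq, smul_mul_assoc, smul_mul_assoc, ← map_mul, ← map_mul] at heq
  have hz : red5.mapMatrix ((w.map UG).prod * G) = 0 := by
    ext i j
    apply red_zero _ (((w'.map UG).prod * G') i j) k
    have h := congrFun (congrFun heq i) j
    simp only [Matrix.smul_apply, RingHom.mapMatrix_apply, Matrix.map_apply, smul_eq_mul] at h
    have hs := sqrt5_ne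
    rw [hk, inv_pow, inv_pow, add_assoc, pow_add] at h
    field_simp at h
    exact h
  apply prod5_ne w hred
  rw [← map_prodG]
  have : (w.map UG).prod = (w.map UG).prod * G * G := by rw [mul_assoc, hG, mul_one]
  rw [this, map_mul, hz, zero_mul]

lemma uniqG : ∀ (w w' : List (Fin 3 × Bool)), w.length = w'.length →
    w.IsChain (fun p q => q ≠ (p.1, !p.2)) → w'.IsChain (fun p q => q ≠ (p.1, !p.2)) →
    ∀ (G G' : Matrix (Fin 2) (Fin 2) GaussianInt), G * G = 1 → G' * G' = 1 →
    (w.map UG).prod * G = (w'.map UG).prod * G' → w = w' ∧ G = G'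
  | [], [], _, _, _, G, G', _, _, h => by simpa using h
  | [], _ :: _, hl, _, _, _, _, _, _, _ => by simp at hl
  | _ :: _, [], hl, _, _, _, _, _, _, _ => by simp at hl
  | p :: w, q :: w', hl, hc, hc', G, G', hG, hG', h => by
    have hpq : p = q := by
      by_contra hne
      have hch : ((p.1, !p.2) :: q :: w').IsChain (fun p q => q ≠ (p.1, !p.2)) := by
        rw [List.isChain_cons_cons]
        exact ⟨by simpa using fun h => hne h.symm, hc'⟩
      apply prod5_ne _ hch
      rw [← map_prodG]
      have e : (((p.1, !p.2) :: q :: w').map UG).prod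
          = UG (p.1, !p.2) * UG p * ((w.map UG).prod * G * G') := by
        have : ((q :: w').map UG).prod = ((p :: w).map UG).prod * G * G' := by
          rw [h, mul_assoc, hG', mul_one]
        rw [List.map_cons, List.prod_cons, this]
        simp only [List.map_cons, List.prod_cons, mul_assoc]
      rw [e, map_mul, map_mul]
      change U5 _ * U5 _ * _ = 0
      rw [U5_conj, zero_mul]
    subst hpq
    have h1 := congrArg (fun M => UG (p.1, !p.2) * M) h
    simp only [List.map_cons, List.prod_cons, ← mul_assoc, UG_conj] at h1
    simp only [smul_mul_assoc, one_mul] at h1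
    have h2 : (w.map UG).prod * G = (w'.map UG).prod * G' := by
      refine Matrix.ext fun i j => ?_
      have := congrFun (congrFun h1 i) j
      simp only [Matrix.smul_apply, smul_eq_mul] at this
      exact mul_left_cancel₀ (show (5 : GaussianInt) ≠ 0 by decide) this
    obtain ⟨r1, r2⟩ := uniqG w w' (by simpa using hl) hc.tail hc'.tail G G' hG hG' h2
    exact ⟨by rw [r1], r2⟩

/-- Uniqueness of the normal form `A₁⋯A_t·B`: if two normal forms (a reduced word in
the `Vᵢ^{±1}`'s followed by a signed Pauli factor) yield equal matrices, then they have
the same length, the same factors `A_j`, and the same Pauli factor `B`. -/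
theorem stmt7 (w w' : List (Fin 3 × Bool))
    (hred : w.Chain' (fun p q => q ≠ (p.1, !p.2)))
    (hred' : w'.Chain' (fun p q => q ≠ (p.1, !p.2)))
    (B B' : Matrix (Fin 2) (Fin 2) ℂ)
    (hB : B ∈ ({1, -1, Pauli 0, -Pauli 0, Pauli 1, -Pauli 1, Pauli 2, -Pauli 2} :
      Set (Matrix (Fin 2) (Fin 2) ℂ)))
    (hB' : B' ∈ ({1, -1, Pauli 0, -Pauli 0, Pauli 1, -Pauli 1, Pauli 2, -Pauli 2} :
      Set (Matrix (Fin 2) (Fin 2) ℂ)))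
    (heq : (w.map VgenLetter).prod * B = (w'.map VgenLetter).prod * B') :
    w = w' ∧ B = B' := by
  obtain ⟨G, hG, rfl⟩ := pauli_lift B hB
  obtain ⟨G', hG', rfl⟩ := pauli_lift B' hB'
  have hl : w.length = w'.length :=
    le_antisymm (not_lt.1 (not_lt_len w w' hred G G' hG heq))
      (not_lt.1 (not_lt_len w' w hred' G' G hG' heq.symm))
  rw [prod_eq, prod_eq, smul_mul_assoc, smul_mul_assoc, ← map_mul, ← map_mul, hl] at heq
  have h2 : (w.map UG).prod * G = (w'.map UG).prod * G' := by
    have h := smul_right_injective _ (pow_ne_zero w'.length (inv_ne_zero sqrt5_ne)) heq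
    refine Matrix.ext fun i j => ?_
    exact GaussianInt.toComplex_injective (congrFun (congrFun h i) j)
  obtain ⟨r1, r2⟩ := uniqG w w' hl hred hred' G G' hG hG' h2
  exact ⟨r1, by rw [r2]⟩
end
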